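/- Let u : ℝ² → ℝ be a smooth solution of -Δu = π²u on the strip Ω∞ = {(x,y) : 0 < y < 1}, continuous up to the boundary, satisfying u(0,y) = 0 for all y ∈ [0,1], u(x,0) = u(x,1) = 0 for all x ∈ ℝ, and |u(x,y)| ≤ C(1+|x|) for some constant C > 0. Then there exists A ∈ ℝ such that u(x,y) = A·x·sin(πy) for all (x,y) in the strip. -/

import Mathlib

open Real

/-- Partial derivative in the first (x) variable. -/
noncomputable def px (u : ℝ → ℝ → ℝ) : ℝ → ℝ → ℝ := fun x y => deriv (fun t => u t y) x

/-- Partial derivative in the second (y) variable. -/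
noncomputable def py (u : ℝ → ℝ → ℝ) : ℝ → ℝ → ℝ := fun x y => deriv (fun t => u x t) y

/-! For fixed `x`, expand `u x` in the functions `sin (k π y)`. Integrating by parts twice in `y`
turns the equation into the ordinary differential equation `a'' = ((k π)² - π²) a` for the `k`-th
sine coefficient `a`. Since `∂u/∂y` need not extend to the boundary of the strip, this is carried
out on the substrips `δ ≤ y ≤ 1 - δ`, where the boundary terms only involve values of `u`, and `δ`
tends to `0` in the integrated form of the differential equation. For `k ≥ 2` a nonzero solution
grows at least like `exp (√3 π |x|)` in one of the two directions, so these coefficients vanish;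
for `k = 1` the coefficient is affine. Finally, a continuous function `f` whose sine coefficients
all vanish is zero, because `f (y) sin (π y)` is then orthogonal to all polynomials in
`cos (π y)`. -/

open Set Filter Topology Function Asymptotics intervalIntegral

/-- `g` is the second derivative of `f` on the whole line, the first derivative being left implicit.
With `g` an expression in `f`, this is a second order differential equation such as `f'' = w² f`. -/
def HasSecondDeriv (f g : ℝ → ℝ) : Prop :=
  ∃ f' : ℝ → ℝ, (∀ x, HasDerivAt f (f' x) x) ∧ ∀ x, HasDerivAt f' (g x) x

lemma hasSecondDeriv_iff_eq_integral {f g : ℝ → ℝ} (hg : Continuous g) :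
    HasSecondDeriv f g ↔ ∀ x, f x = f 0 + (f 1 - f 0 - ∫ s in 0..1, ∫ r in 0..s, g r) * x +
      ∫ s in 0..x, ∫ r in 0..s, g r := by
  -- The slope at `0` is eliminated in favour of `f 0` and `f 1`, so that the right-hand side
  -- involves only quantities which pass to a limit.
  have hprim : Continuous fun s => ∫ r in 0..s, g r := continuous_primitive hg.intervalIntegrable 0
  constructor
  · rintro ⟨f', hf, hf'⟩ x
    have eq_f' : ∀ s, f' s = f' 0 + ∫ r in 0..s, g r := fun s => by
      rw [integral_eq_sub_of_hasDerivAt (fun r _ => hf' r) (hg.intervalIntegrable _ _)]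
      ring
    have eq_f : ∀ x, f x = f 0 + f' 0 * x + ∫ s in 0..x, ∫ r in 0..s, g r := fun x => by
      have hftc := integral_eq_sub_of_hasDerivAt (a := 0) (b := x)
        (fun s _ => (hf s).congr_deriv (eq_f' s)) ((hprim.const_add _).intervalIntegrable _ _)
      rw [integral_add (continuous_const.intervalIntegrable _ _) (hprim.intervalIntegrable _ _),
        integral_const, smul_eq_mul] at hftc
      linear_combination -hftc
    linear_combination eq_f x - x * eq_f 1
  · intro hf
    have hderiv : ∀ c x, HasDerivAt (fun x => f 0 + c * x + ∫ s in 0..x, ∫ r in 0..s, g r)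
        (c + ∫ r in 0..x, g r) x := fun c x =>
      ((hasDerivAt_const_mul c).const_add (f 0)).add
        (hprim.integral_hasStrictDerivAt 0 x).hasDerivAt
    exact ⟨_, fun x => (hderiv _ x).congr_of_eventuallyEq (.of_forall hf),
      fun x => (hg.integral_hasStrictDerivAt 0 x).hasDerivAt.const_add _⟩

namespace HasSecondDeriv

lemma of_mem_closure {T : Type*} [TopologicalSpace T] [FirstCountableTopology T] {S : Set T}
    {t₀ : T} {F G : T → ℝ → ℝ} (ht₀ : t₀ ∈ closure S)
    (hF : ∀ x, ContinuousOn (fun t => F t x) (insert t₀ S))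
    (hG : ContinuousOn (uncurry G) (insert t₀ S ×ˢ univ))
    (h : ∀ t ∈ S, HasSecondDeriv (F t) (G t)) : HasSecondDeriv (F t₀) (G t₀) := by
  have hslice : ∀ t ∈ insert t₀ S, Continuous (G t) := fun t ht =>
    hG.comp_continuous (f := fun x => (t, x)) (by fun_prop) fun _ => ⟨ht, mem_univ _⟩
  have hprim : ∀ x, ContinuousOn (fun t => ∫ s in 0..x, ∫ r in 0..s, G t r) (insert t₀ S) := by
    intro x
    have hGr : Continuous (uncurry fun (t : ↥(insert t₀ S)) r => G t r) :=
      hG.comp_continuous (f := fun p : ↥(insert t₀ S) × ℝ => ((p.1 : T), p.2)) (by fun_prop)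
        fun p => ⟨p.1.2, mem_univ _⟩
    rw [continuousOn_iff_continuous_domRestrict]
    exact continuous_parametric_intervalIntegral_of_continuous'
      (continuous_parametric_primitive_of_continuous hGr) 0 x
  rw [hasSecondDeriv_iff_eq_integral (hslice t₀ (mem_insert _ _))]
  intro x
  have heq : EqOn (fun t => F t x) (fun t => F t 0 +
      (F t 1 - F t 0 - ∫ s in 0..1, ∫ r in 0..s, G t r) * x + ∫ s in 0..x, ∫ r in 0..s, G t r) S :=
    fun t ht => (hasSecondDeriv_iff_eq_integral (hslice t (mem_insert_of_mem _ ht))).1 (h t ht) x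
  exact heq.of_subset_closure (hF x)
    (((hF 0).add ((((hF 1).sub (hF 0)).sub (hprim 1)).mul continuousOn_const)).add (hprim x))
    (subset_insert _ _) (insert_subset ht₀ subset_closure) (mem_insert _ _)

lemma exists_eq_affine {f : ℝ → ℝ} (hf : HasSecondDeriv f fun _ => 0) :
    ∃ A B : ℝ, ∀ x, f x = A * x + B := by
  refine ⟨f 1 - f 0, f 0, fun x => ?_⟩
  simpa [add_comm] using (hasSecondDeriv_iff_eq_integral continuous_const).1 hf x

lemma exists_eq_exp_add_exp {f : ℝ → ℝ} {w : ℝ} (hw : w ≠ 0)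
    (hf : HasSecondDeriv f fun x => w ^ 2 * f x) :
    ∃ c d : ℝ, ∀ x, f x = c * exp (w * x) + d * exp (-(w * x)) := by
  obtain ⟨f', hf, hf'⟩ := hf
  -- `f'' - w² f = 0` factors as `(D - σw) (f' + σw f) = 0` for both signs `σ`.
  have first_order : ∀ σ : ℝ, σ ^ 2 = 1 →
      ∃ c, ∀ x, (f' x + σ * w * f x) * exp (-(σ * w * x)) = c := by
    intro σ hσ
    have hd : ∀ x, HasDerivAt (fun x => (f' x + σ * w * f x) * exp (-(σ * w * x))) 0 x := by
      intro x
      refine (((hf' x).add ((hf x).const_mul (σ * w))).mul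
        (((hasDerivAt_id x).const_mul (σ * w)).neg.exp)).congr_deriv ?_
      simp only [Pi.add_apply, id]
      linear_combination -w ^ 2 * f x * exp (-(σ * w * x)) * hσ
    exact ⟨_, fun x => is_const_of_deriv_eq_zero (fun x => (hd x).differentiableAt)
      (fun x => (hd x).deriv) x 0⟩
  obtain ⟨c, hc⟩ := first_order 1 (by norm_num)
  obtain ⟨d, hd⟩ := first_order (-1) (by norm_num)
  refine ⟨c / (2 * w), -d / (2 * w), fun x => ?_⟩
  have hexp : exp (w * x) * exp (-(w * x)) = 1 := by rw [← exp_add, add_neg_cancel, exp_zero]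
  rw [← hc x, ← hd x]
  field_simp
  ring_nf
  linear_combination (-2 * w * f x) * hexp

end HasSecondDeriv

lemma eq_zero_of_exp_add_exp_isLittleO {c d w : ℝ} (hw : 0 < w)
    (h : (fun x => c * exp (w * x) + d * exp (-(w * x))) =o[atTop] fun x => exp (w * x)) :
    c = 0 := by
  have hdecay : Tendsto (fun x => c + d * exp (-(w * x)) / exp (w * x)) atTop (𝓝 (c + d * 0)) := by
    simp_rw [mul_div_assoc, ← exp_sub]
    refine ((tendsto_exp_atBot.comp ?_).const_mul d).const_add c
    have : ∀ x, -(w * x) - w * x = -(2 * w) * x := fun x => by ring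
    simp_rw [this]
    exact tendsto_id.const_mul_atTop_of_neg (by linarith)
  have hlim := h.tendsto_div_nhds_zero
  simp_rw [add_div, mul_div_cancel_right₀ _ (exp_ne_zero _)] at hlim
  simpa using tendsto_nhds_unique hdecay hlim

lemma HasSecondDeriv.eq_zero_of_isLittleO_exp {f : ℝ → ℝ} {w : ℝ} (hw : 0 < w)
    (hf : HasSecondDeriv f fun x => w ^ 2 * f x)
    (hgrowth : f =o[cocompact ℝ] fun x => exp (w * |x|)) (x : ℝ) : f x = 0 := by
  obtain ⟨c, d, h⟩ := hf.exists_eq_exp_add_exp hw.ne'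
  have hc : c = 0 := by
    refine eq_zero_of_exp_add_exp_isLittleO (d := d) hw ?_
    refine (hgrowth.mono atTop_le_cocompact).congr' (.of_forall h) ?_
    filter_upwards [eventually_ge_atTop 0] with x hx
    rw [abs_of_nonneg hx]
  have hd : d = 0 := by
    refine eq_zero_of_exp_add_exp_isLittleO (d := c) hw ?_
    refine ((hgrowth.mono atBot_le_cocompact).comp_tendsto tendsto_neg_atTop_atBot).congr'
      (.of_forall fun x => ?_) ?_
    · simp [h, add_comm]
    · filter_upwards [eventually_ge_atTop 0] with x hx
      simp [abs_of_nonneg hx]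
  simp [h, hc, hd]

section ParametricIntegral

variable {E : Type*} [NormedAddCommGroup E] [NormedSpace ℝ E] {a b : ℝ}

lemma continuousOn_intervalIntegral_of_continuousOn {X : Type*} [TopologicalSpace X]
    [FirstCountableTopology X] {f : X → ℝ → E} {D : Set X} (hab : a ≤ b)
    (hf : ContinuousOn (uncurry f) (D ×ˢ Icc a b)) :
    ContinuousOn (fun x => ∫ t in a..b, f x t) D := by
  have hext : Continuous (uncurry fun (x : D) t => f x (projIcc a b hab t)) :=
    hf.comp_continuous (f := fun p : D × ℝ => ((p.1 : X), (projIcc a b hab p.2 : ℝ)))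
      (by fun_prop) fun p => ⟨p.1.2, (projIcc a b hab p.2).2⟩
  rw [continuousOn_iff_continuous_domRestrict]
  refine (continuous_parametric_intervalIntegral_of_continuous' hext a b).congr fun x =>
    integral_congr fun t ht => ?_
  rw [uIcc_of_le hab] at ht
  simp only [projIcc_of_mem hab ht]

lemma hasDerivAt_intervalIntegral_of_continuousOn {f f' : ℝ → ℝ → E} (hab : a ≤ b)
    (hf : ContinuousOn (uncurry f) (univ ×ˢ Icc a b))
    (hf' : ContinuousOn (uncurry f') (univ ×ˢ Icc a b))
    (hderiv : ∀ x, ∀ t ∈ Icc a b, HasDerivAt (fun x => f x t) (f' x t) x) (x : ℝ) :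
    HasDerivAt (fun x => ∫ t in a..b, f x t) (∫ t in a..b, f' x t) x := by
  have hint : ∀ {g : ℝ → ℝ → E}, ContinuousOn (uncurry g) (univ ×ˢ Icc a b) → ∀ x,
      IntervalIntegrable (g x) MeasureTheory.volume a b := fun hg x =>
    ContinuousOn.intervalIntegrable_of_Icc hab
      (hg.comp (f := fun t => (x, t)) (by fun_prop) fun _ ht => ⟨mem_univ _, ht⟩)
  obtain ⟨M, hM⟩ := (isCompact_Icc.prod isCompact_Icc).exists_bound_of_continuousOn
    (hf'.mono (prod_mono (subset_univ (Icc (x - 1) (x + 1))) subset_rfl))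
  refine (hasDerivAt_integral_of_dominated_loc_of_deriv_le (bound := fun _ => M)
    (Icc_mem_nhds (sub_one_lt x) (lt_add_one x))
    (.of_forall fun z => (hint hf z).aestronglyMeasurable_restrict_uIoc) (hint hf x)
    (hint hf' x).aestronglyMeasurable_restrict_uIoc (.of_forall fun t ht z hz => ?_)
    (continuous_const.intervalIntegrable _ _) (.of_forall fun t ht z _ => ?_)).2
  all_goals rw [uIoc_of_le hab] at ht
  · exact hM (z, t) ⟨hz, Ioc_subset_Icc_self ht⟩
  · exact hderiv z t (Ioc_subset_Icc_self ht)

end ParametricIntegral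

section SineCompleteness

lemma eqOn_zero_of_integral_mul_eval_eq_zero {a b : ℝ} (hab : a < b) {g h : ℝ → ℝ}
    (hg : ContinuousOn g (Icc a b)) (hinj : InjOn g (Icc a b)) (hh : ContinuousOn h (Icc a b))
    (H : ∀ p : Polynomial ℝ, ∫ t in a..b, h t * p.eval (g t) = 0) : EqOn h 0 (Icc a b) := by
  let gI : C(Icc a b, ℝ) := ⟨(Icc a b).domRestrict g, hg.domRestrict⟩
  let hI : C(Icc a b, ℝ) := ⟨(Icc a b).domRestrict h, hh.domRestrict⟩
  let pairing : C(Icc a b, ℝ) → ℝ := fun q =>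
    ∫ t in a..b, hI (projIcc a b hab.le t) * q (projIcc a b hab.le t)
  have hpairing : Continuous pairing :=
    continuous_parametric_intervalIntegral_of_continuous' (by fun_prop) a b
  have hclosed : IsClosed {q | pairing q = 0} := isClosed_eq hpairing continuous_const
  have hadjoin : (Algebra.adjoin ℝ {gI} : Set C(Icc a b, ℝ)) ⊆ {q | pairing q = 0} := by
    rw [Algebra.adjoin_singleton_eq_range_aeval]
    rintro _ ⟨p, rfl⟩
    refine (integral_congr fun t ht => ?_).trans (H p)
    rw [uIcc_of_le hab.le] at ht
    simp only [projIcc_of_mem hab.le ht]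
    exact congrArg (h t * ·) (Polynomial.aeval_continuousMap_apply p gI ⟨t, ht⟩)
  have hdense : (Algebra.adjoin ℝ {gI}).topologicalClosure = ⊤ := by
    refine ContinuousMap.subalgebra_topologicalClosure_eq_top_of_separatesPoints _ fun s t hst =>
      ⟨gI, ⟨gI, Algebra.self_mem_adjoin_singleton ℝ gI, rfl⟩, fun hst' => ?_⟩
    exact hst (Subtype.ext (hinj s.2 t.2 hst'))
  have hmem : hI ∈ closure (Algebra.adjoin ℝ {gI} : Set C(Icc a b, ℝ)) := by
    rw [← Subalgebra.topologicalClosure_coe, hdense]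
    trivial
  have hself : ∫ t in a..b, h t * h t = 0 := by
    refine (integral_congr fun t ht => ?_).trans (hclosed.closure_subset_iff.2 hadjoin hmem)
    rw [uIcc_of_le hab.le] at ht
    simp only [projIcc_of_mem hab.le ht]
    rfl
  intro t ht
  by_contra hne
  exact hself.not_gt (integral_pos hab (hh.mul hh) (fun s _ => mul_self_nonneg _)
    ⟨t, ht, mul_self_pos.2 hne⟩)

variable {f : ℝ → ℝ}

lemma integral_mul_sin_mul_eval_cos_eq_zero (hf : ContinuousOn f (Icc 0 1))
    (h : ∀ k : ℕ, ∫ s in 0..1, f s * sin (k * π * s) = 0) (p : Polynomial ℝ) (k : ℕ) :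
    ∫ s in 0..1, f s * sin (k * π * s) * p.eval (cos (π * s)) = 0 := by
  have hint : ∀ {g : ℝ → ℝ}, Continuous g →
      IntervalIntegrable (fun s => f s * g s) MeasureTheory.volume 0 1 := fun hg =>
    (hf.mul hg.continuousOn).intervalIntegrable_of_Icc zero_le_one
  simp_rw [mul_assoc (f _)]
  induction p using Polynomial.induction_on generalizing k with
  | C a =>
    simp_rw [Polynomial.eval_C, ← mul_assoc]
    rw [integral_mul_const, h, zero_mul]
  | add p q hp hq =>
    simp_rw [Polynomial.eval_add, mul_add]
    rw [integral_add (hint (by fun_prop)) (hint (by fun_prop)), hp, hq, add_zero]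
  | monomial n a ih =>
    cases k with
    | zero => simp
    | succ k =>
      have product_to_sum : ∀ s : ℝ, sin ((k + 1 : ℕ) * π * s) * cos (π * s) =
          (sin ((k + 2 : ℕ) * π * s) + sin (k * π * s)) / 2 := fun s => by
        rw [show ((k + 2 : ℕ) : ℝ) * π * s = (k + 1 : ℕ) * π * s + π * s by push_cast; ring,
          show (k : ℝ) * π * s = (k + 1 : ℕ) * π * s - π * s by push_cast; ring, sin_add, sin_sub]
        ring
      set p : Polynomial ℝ := .C a * .X ^ n with hp
      calc ∫ s in 0..1, f s * (sin ((k + 1 : ℕ) * π * s) *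
            (Polynomial.C a * Polynomial.X ^ (n + 1)).eval (cos (π * s)))
          = ∫ s in 0..1, (f s * (sin ((k + 2 : ℕ) * π * s) * p.eval (cos (π * s))) +
              f s * (sin (k * π * s) * p.eval (cos (π * s)))) / 2 := by
            refine integral_congr fun s _ => ?_
            simp only [pow_succ, ← mul_assoc, ← hp, Polynomial.eval_mul_X]
            linear_combination f s * p.eval (cos (π * s)) * product_to_sum s
        _ = 0 := by
            rw [integral_div, integral_add (hint (by fun_prop)) (hint (by fun_prop)), ih, ih]
            simp

lemma eq_zero_of_integral_mul_sin_eq_zero (hf : ContinuousOn f (Icc 0 1))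
    (h : ∀ k : ℕ, ∫ s in 0..1, f s * sin (k * π * s) = 0) {y : ℝ} (hy : y ∈ Ioo (0 : ℝ) 1) :
    f y = 0 := by
  have hmaps : ∀ s ∈ Icc (0 : ℝ) 1, π * s ∈ Icc 0 π := fun s hs =>
    ⟨by nlinarith [pi_pos, hs.1], by nlinarith [pi_pos, hs.2]⟩
  have hinj : InjOn (fun s => cos (π * s)) (Icc 0 1) :=
    injOn_cos.comp (mul_right_injective₀ pi_ne_zero).injOn hmaps
  have hzero := eqOn_zero_of_integral_mul_eval_eq_zero zero_lt_one (by fun_prop) hinj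
    (hf.mul (by fun_prop : ContinuousOn (fun s => sin (π * s)) (Icc 0 1))) fun p => by
      simpa using integral_mul_sin_mul_eval_cos_eq_zero hf h p 1
  have hsin : 0 < sin (π * y) :=
    sin_pos_of_pos_of_lt_pi (mul_pos pi_pos hy.1) (by nlinarith [pi_pos, hy.2])
  exact (mul_eq_zero.1 (hzero (Ioo_subset_Icc_self hy))).resolve_right hsin.ne'

lemma integral_mul_sin_of_hasDerivAt {f' f'' : ℝ → ℝ}
    (hf : ∀ s ∈ Icc (0 : ℝ) 1, HasDerivAt f (f' s) s)
    (hf' : ∀ s ∈ Icc (0 : ℝ) 1, HasDerivAt f' (f'' s) s) (hf'' : ContinuousOn f'' (Icc 0 1))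
    (k : ℕ) :
    ∫ s in 0..1, f'' s * sin (k * π * s) =
      k * π * (f 0 - f 1 * cos (k * π)) - (k * π) ^ 2 * ∫ s in 0..1, f s * sin (k * π * s) := by
  have hint : ∀ {g : ℝ → ℝ}, ContinuousOn g (Icc 0 1) →
      IntervalIntegrable (fun s => g s * sin (k * π * s)) MeasureTheory.volume 0 1 := fun hg =>
    (hg.mul (by fun_prop)).intervalIntegrable_of_Icc zero_le_one
  have hint_f := hint fun s hs => (hf s hs).continuousAt.continuousWithinAt
  have hwronskian : ∀ s ∈ uIcc (0 : ℝ) 1,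
      HasDerivAt (fun s => f' s * sin (k * π * s) - f s * (k * π * cos (k * π * s)))
        (f'' s * sin (k * π * s) + (k * π) ^ 2 * (f s * sin (k * π * s))) s := by
    intro s hs
    rw [uIcc_of_le zero_le_one] at hs
    have harg : HasDerivAt (fun s : ℝ => k * π * s) (k * π) s := hasDerivAt_const_mul _
    refine (((hf' s hs).mul harg.sin).sub
      ((hf s hs).mul (harg.cos.const_mul (k * π)))).congr_deriv ?_
    ring
  have hftc := integral_eq_sub_of_hasDerivAt hwronskian ((hint hf'').add (hint_f.const_mul _))
  rw [integral_add (hint hf'') (hint_f.const_mul _), integral_const_mul] at hftc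
  simp only [mul_one, mul_zero, sin_nat_mul_pi, sin_zero, cos_zero, zero_sub] at hftc
  linear_combination hftc

lemma integral_sin_pi_mul_sin_nat_mul_pi (k : ℕ) :
    ∫ s in 0..1, sin (π * s) * sin (k * π * s) = if k = 1 then 1 / 2 else 0 := by
  split_ifs with hk
  · have hsq := integral_comp_mul_left (a := 0) (b := 1) (fun t => sin t ^ 2) pi_ne_zero
    simp only [mul_zero, mul_one, integral_sin_sq, sin_zero, sin_pi, zero_mul, sub_zero, zero_add,
      smul_eq_mul] at hsq
    simp only [hk, Nat.cast_one, one_mul, ← pow_two, hsq]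
    field_simp
  · have harg : ∀ s : ℝ, HasDerivAt (fun s : ℝ => π * s) π s := fun s => hasDerivAt_const_mul _
    have hgreen := integral_mul_sin_of_hasDerivAt (fun s _ => (harg s).sin)
      (fun s _ => (harg s).cos.mul_const π) (by fun_prop) k
    have hconst : ∀ s, -sin (π * s) * π * π * sin (k * π * s) =
        -π ^ 2 * (sin (π * s) * sin (k * π * s)) := fun s => by ring
    simp_rw [hconst] at hgreen
    rw [integral_const_mul] at hgreen
    have hk' : (k : ℝ) ^ 2 - 1 ≠ 0 := by
      rw [sub_ne_zero, ne_eq, pow_eq_one_iff_of_nonneg k.cast_nonneg two_ne_zero]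
      exact_mod_cast hk
    refine (mul_eq_zero.1 ?_).resolve_left (mul_ne_zero (pow_ne_zero 2 pi_ne_zero) hk')
    simp only [mul_zero, mul_one, sin_zero, sin_pi] at hgreen
    linear_combination hgreen

lemma eq_mul_sin_of_integral_mul_sin_eq_zero (hf : ContinuousOn f (Icc 0 1))
    (h : ∀ k : ℕ, k ≠ 1 → ∫ s in 0..1, f s * sin (k * π * s) = 0) {y : ℝ}
    (hy : y ∈ Ioo (0 : ℝ) 1) : f y = 2 * (∫ s in 0..1, f s * sin (π * s)) * sin (π * y) := by
  set a := ∫ s in 0..1, f s * sin (π * s) with ha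
  have hcoeff : ∀ k : ℕ, ∫ s in 0..1, (f s - 2 * a * sin (π * s)) * sin (k * π * s) = 0 := by
    intro k
    have hint : IntervalIntegrable (fun s => f s * sin (k * π * s)) MeasureTheory.volume 0 1 :=
      (hf.mul (by fun_prop)).intervalIntegrable_of_Icc zero_le_one
    have hint_sin : IntervalIntegrable (fun s => 2 * a * (sin (π * s) * sin (k * π * s)))
        MeasureTheory.volume 0 1 := Continuous.intervalIntegrable (by fun_prop) _ _
    simp_rw [sub_mul, mul_assoc (2 * a)]
    rw [integral_sub hint hint_sin, integral_const_mul, integral_sin_pi_mul_sin_nat_mul_pi]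
    split_ifs with hk
    · simp only [hk, Nat.cast_one, one_mul, ← ha]
      ring
    · rw [h k hk]
      ring
  exact sub_eq_zero.1 (eq_zero_of_integral_mul_sin_eq_zero (hf.sub (by fun_prop)) hcoeff hy)

end SineCompleteness

section PartialDerivatives

variable {u : ℝ → ℝ → ℝ} {x y : ℝ} {p : ℝ × ℝ}

lemma hasDerivAt_fderiv_fst (hu : DifferentiableAt ℝ (uncurry u) (x, y)) :
    HasDerivAt (fun t => u t y) (fderiv ℝ (uncurry u) (x, y) (1, 0)) x :=
  hu.hasFDerivAt.comp_hasDerivAt (f := fun t => (t, y)) x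
    ((hasDerivAt_id x).prodMk (hasDerivAt_const x y))

lemma hasDerivAt_fderiv_snd (hu : DifferentiableAt ℝ (uncurry u) (x, y)) :
    HasDerivAt (fun t => u x t) (fderiv ℝ (uncurry u) (x, y) (0, 1)) y :=
  hu.hasFDerivAt.comp_hasDerivAt (f := fun t => (x, t)) y
    ((hasDerivAt_const y x).prodMk (hasDerivAt_id y))

lemma hasDerivAt_px (hu : DifferentiableAt ℝ (uncurry u) (x, y)) :
    HasDerivAt (fun t => u t y) (px u x y) x :=
  (hasDerivAt_fderiv_fst hu).differentiableAt.hasDerivAt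

lemma hasDerivAt_py (hu : DifferentiableAt ℝ (uncurry u) (x, y)) :
    HasDerivAt (fun t => u x t) (py u x y) y :=
  (hasDerivAt_fderiv_snd hu).differentiableAt.hasDerivAt

lemma eventually_differentiableAt_of_contDiffAt {n : WithTop ℕ∞} (hu : ContDiffAt ℝ n (uncurry u) p)
    (hn : 1 ≤ n) : ∀ᶠ q in 𝓝 p, DifferentiableAt ℝ (uncurry u) q :=
  ((hu.of_le hn).eventually (by simp)).mono fun _ hq => hq.differentiableAt (by simp)

lemma contDiffAt_px {m n : WithTop ℕ∞} (hu : ContDiffAt ℝ n (uncurry u) p) (hmn : m + 1 ≤ n) :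
    ContDiffAt ℝ m (uncurry (px u)) p :=
  ((hu.fderiv_right hmn).clm_apply contDiffAt_const).congr_of_eventuallyEq <|
    (eventually_differentiableAt_of_contDiffAt hu (le_add_self.trans hmn)).mono fun _ hq =>
      (hasDerivAt_fderiv_fst hq).deriv

lemma contDiffAt_py {m n : WithTop ℕ∞} (hu : ContDiffAt ℝ n (uncurry u) p) (hmn : m + 1 ≤ n) :
    ContDiffAt ℝ m (uncurry (py u)) p :=
  ((hu.fderiv_right hmn).clm_apply contDiffAt_const).congr_of_eventuallyEq <|
    (eventually_differentiableAt_of_contDiffAt hu (le_add_self.trans hmn)).mono fun _ hq =>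
      (hasDerivAt_fderiv_snd hq).deriv

end PartialDerivatives

section SineCoeff

/-- The `k`-th sine coefficient `∫₀¹ v(x, s) sin(kπs) ds` of the slice of `v` at abscissa `x`,
without the normalizing factor `2`. -/
noncomputable def sineCoeff (k : ℕ) (v : ℝ → ℝ → ℝ) (x : ℝ) : ℝ :=
  ∫ s in 0..1, v x s * sin (k * π * s)

lemma abs_sineCoeff_le {v : ℝ → ℝ → ℝ} {x M : ℝ} (hv : ∀ s ∈ Icc (0 : ℝ) 1, |v x s| ≤ M) (k : ℕ) :
    |sineCoeff k v x| ≤ M := by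
  have hbound := norm_integral_le_of_norm_le_const (a := 0) (b := 1) (C := M)
    (f := fun s => v x s * sin (k * π * s)) fun s hs => by
      rw [uIoc_of_le zero_le_one] at hs
      rw [norm_mul]
      exact (mul_le_of_le_one_right (norm_nonneg _) (abs_sin_le_one _)).trans
        (hv s (Ioc_subset_Icc_self hs))
  simpa [sineCoeff] using hbound

variable {v : ℝ → ℝ → ℝ}

lemma hasDerivAt_sineCoeff
    (hv : ∀ p : ℝ × ℝ, p.2 ∈ Icc (0 : ℝ) 1 → ContDiffAt ℝ 1 (uncurry v) p) (k : ℕ) (x : ℝ) :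
    HasDerivAt (sineCoeff k v) (sineCoeff k (px v) x) x := by
  have hcont : ∀ {w : ℝ → ℝ → ℝ},
      (∀ p : ℝ × ℝ, p.2 ∈ Icc (0 : ℝ) 1 → ContDiffAt ℝ 0 (uncurry w) p) →
      ContinuousOn (uncurry fun x s => w x s * sin (k * π * s)) (univ ×ˢ Icc 0 1) := fun hw =>
    ContinuousOn.mul (fun p hp => (hw p hp.2).continuousAt.continuousWithinAt) (by fun_prop)
  exact hasDerivAt_intervalIntegral_of_continuousOn zero_le_one
    (hcont fun p hp => (hv p hp).of_le zero_le_one)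
    (hcont fun p hp => contDiffAt_px (hv p hp) (by simp))
    (fun x s hs => (hasDerivAt_px ((hv (x, s) hs).differentiableAt (by simp))).mul_const _) x

lemma sineCoeff_py_py (hv : ∀ p : ℝ × ℝ, p.2 ∈ Icc (0 : ℝ) 1 → ContDiffAt ℝ 2 (uncurry v) p)
    (k : ℕ) (x : ℝ) :
    sineCoeff k (py (py v)) x =
      k * π * (v x 0 - v x 1 * cos (k * π)) - (k * π) ^ 2 * sineCoeff k v x := by
  have hpy : ∀ p : ℝ × ℝ, p.2 ∈ Icc (0 : ℝ) 1 → ContDiffAt ℝ 1 (uncurry (py v)) p := fun p hp =>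
    contDiffAt_py (hv p hp) (by norm_num)
  refine integral_mul_sin_of_hasDerivAt
    (fun s hs => hasDerivAt_py ((hv (x, s) hs).differentiableAt (by simp)))
    (fun s hs => hasDerivAt_py ((hpy (x, s) hs).differentiableAt (by simp))) (fun s hs => ?_) k
  have hpypy : ContDiffAt ℝ 0 (uncurry (py (py v))) (x, s) := contDiffAt_py (hpy _ hs) (by simp)
  exact (hpypy.continuousAt.comp (f := fun s => (x, s)) (by fun_prop)).continuousWithinAt

lemma hasSecondDeriv_sineCoeff
    (hv : ∀ p : ℝ × ℝ, p.2 ∈ Icc (0 : ℝ) 1 → ContDiffAt ℝ 2 (uncurry v) p) {a b : ℝ}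
    (hPDE : ∀ x, ∀ s ∈ Icc (0 : ℝ) 1, px (px v) x s = a * py (py v) x s + b * v x s) (k : ℕ) :
    HasSecondDeriv (sineCoeff k v) fun x =>
      (b - a * (k * π) ^ 2) * sineCoeff k v x + a * (k * π) * (v x 0 - v x 1 * cos (k * π)) := by
  refine ⟨sineCoeff k (px v), hasDerivAt_sineCoeff (fun p hp => (hv p hp).of_le one_le_two) k,
    fun x => (hasDerivAt_sineCoeff (fun p hp => contDiffAt_px (hv p hp) (by norm_num))
      k x).congr_deriv ?_⟩
  have hint : ∀ {w : ℝ → ℝ → ℝ},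
      (∀ p : ℝ × ℝ, p.2 ∈ Icc (0 : ℝ) 1 → ContDiffAt ℝ 0 (uncurry w) p) →
      IntervalIntegrable (fun s => w x s * sin (k * π * s)) MeasureTheory.volume 0 1 := fun hw =>
    ContinuousOn.intervalIntegrable_of_Icc zero_le_one (ContinuousOn.mul (fun s hs =>
      ((hw (x, s) hs).continuousAt.comp (f := fun s => (x, s)) (by fun_prop)).continuousWithinAt)
        (by fun_prop))
  have hsum : sineCoeff k (px (px v)) x =
      a * sineCoeff k (py (py v)) x + b * sineCoeff k v x := by
    have hpypy := hint (w := py (py v)) fun p hp =>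
      contDiffAt_py (m := 0) (contDiffAt_py (m := 1) (hv p hp) (by norm_num)) (by simp)
    simp only [sineCoeff]
    rw [← integral_const_mul, ← integral_const_mul, ← integral_add (hpypy.const_mul a)
      ((hint fun p hp => (hv p hp).of_le zero_le_two).const_mul b)]
    refine integral_congr fun s hs => ?_
    rw [uIcc_of_le zero_le_one] at hs
    linear_combination sin (k * π * s) * hPDE x s hs
  rw [hsum, sineCoeff_py_py hv]
  ring

end SineCoeff

section StripShrinking

/-- The restriction of `u` to the substrip `δ ≤ y ≤ 1 - δ`, rescaled vertically to height `1`. For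
`δ > 0` it is as smooth up to the boundary as `u` is inside the unit strip, and `shrink 0 u = u`. -/
def shrink (δ : ℝ) (u : ℝ → ℝ → ℝ) : ℝ → ℝ → ℝ := fun x s => u x (δ + (1 - 2 * δ) * s)

lemma shrink_zero (u : ℝ → ℝ → ℝ) : shrink 0 u = u := by
  ext x s
  simp [shrink]

variable {δ s : ℝ} {u : ℝ → ℝ → ℝ}

lemma add_one_sub_two_mul_mul_mem_Ioo (hδ : δ ∈ Ioo (0 : ℝ) (1 / 2)) (hs : s ∈ Icc (0 : ℝ) 1) :
    δ + (1 - 2 * δ) * s ∈ Ioo (0 : ℝ) 1 := by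
  obtain ⟨hδ₀, hδ₁⟩ := hδ
  obtain ⟨hs₀, hs₁⟩ := hs
  constructor <;> nlinarith

lemma add_one_sub_two_mul_mul_mem_Icc (hδ : δ ∈ Ico (0 : ℝ) (1 / 2)) (hs : s ∈ Icc (0 : ℝ) 1) :
    δ + (1 - 2 * δ) * s ∈ Icc (0 : ℝ) 1 := by
  obtain ⟨hδ₀, hδ₁⟩ := hδ
  obtain ⟨hs₀, hs₁⟩ := hs
  constructor <;> nlinarith

lemma py_shrink (δ : ℝ) (u : ℝ → ℝ → ℝ) :
    py (shrink δ u) = fun x s => (1 - 2 * δ) * shrink δ (py u) x s := by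
  ext x s
  simpa only [py, shrink, smul_eq_mul, deriv_comp_const_add] using
    deriv_comp_mul_left (1 - 2 * δ) (fun t => u x (δ + t)) s

lemma py_py_shrink (δ : ℝ) (u : ℝ → ℝ → ℝ) (x s : ℝ) :
    py (py (shrink δ u)) x s = (1 - 2 * δ) ^ 2 * shrink δ (py (py u)) x s := by
  have hmul : py (py (shrink δ u)) x s = (1 - 2 * δ) * py (shrink δ (py u)) x s := by
    rw [py_shrink]
    exact deriv_const_mul_field _
  rw [hmul, py_shrink]
  ring

lemma contDiffAt_shrink {n : WithTop ℕ∞}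
    (hu : ContDiffOn ℝ n (uncurry u) (Prod.snd ⁻¹' Ioo (0 : ℝ) 1))
    (hδ : δ ∈ Ioo (0 : ℝ) (1 / 2)) {p : ℝ × ℝ} (hp : p.2 ∈ Icc (0 : ℝ) 1) :
    ContDiffAt ℝ n (uncurry (shrink δ u)) p := by
  have hopen : IsOpen (Prod.snd ⁻¹' Ioo (0 : ℝ) 1 : Set (ℝ × ℝ)) :=
    isOpen_Ioo.preimage continuous_snd
  exact (hu.contDiffAt (hopen.mem_nhds (add_one_sub_two_mul_mul_mem_Ioo hδ hp))).comp
    (f := fun q : ℝ × ℝ => (q.1, δ + (1 - 2 * δ) * q.2)) p (by fun_prop)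

lemma continuousOn_shrink (hu : ContinuousOn (uncurry u) (Prod.snd ⁻¹' Icc (0 : ℝ) 1)) :
    ContinuousOn (uncurry fun q : ℝ × ℝ => shrink q.1 u q.2)
      ((Ico (0 : ℝ) (1 / 2) ×ˢ univ) ×ˢ Icc 0 1) :=
  hu.comp (f := fun q : (ℝ × ℝ) × ℝ => (q.1.2, q.1.1 + (1 - 2 * q.1.1) * q.2)) (by fun_prop)
    fun _ hq => add_one_sub_two_mul_mul_mem_Icc hq.1.1 hq.2

lemma continuousOn_sineCoeff_shrink
    (hu : ContinuousOn (uncurry u) (Prod.snd ⁻¹' Icc (0 : ℝ) 1)) (k : ℕ) :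
    ContinuousOn (fun q : ℝ × ℝ => sineCoeff k (shrink q.1 u) q.2)
      (Ico (0 : ℝ) (1 / 2) ×ˢ univ) :=
  continuousOn_intervalIntegral_of_continuousOn zero_le_one
    ((continuousOn_shrink hu).mul (by fun_prop))

lemma hasSecondDeriv_sineCoeff_shrink {c : ℝ}
    (hu : ContDiffOn ℝ 2 (uncurry u) (Prod.snd ⁻¹' Ioo (0 : ℝ) 1))
    (hPDE : ∀ x y, 0 < y → y < 1 → px (px u) x y + py (py u) x y = -c * u x y)
    (hδ : δ ∈ Ioo (0 : ℝ) (1 / 2)) (k : ℕ) :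
    HasSecondDeriv (sineCoeff k (shrink δ u)) fun x =>
      ((k * π / (1 - 2 * δ)) ^ 2 - c) * sineCoeff k (shrink δ u) x -
        k * π / (1 - 2 * δ) ^ 2 * (shrink δ u x 0 - shrink δ u x 1 * cos (k * π)) := by
  have hδ' : 1 - 2 * δ ≠ 0 := by linarith [hδ.2]
  have hPDE' : ∀ x, ∀ s ∈ Icc (0 : ℝ) 1, px (px (shrink δ u)) x s =
      -1 / (1 - 2 * δ) ^ 2 * py (py (shrink δ u)) x s + -c * shrink δ u x s := by
    intro x s hs
    obtain ⟨hy₀, hy₁⟩ := add_one_sub_two_mul_mul_mem_Ioo hδ hs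
    have hpx : px (px (shrink δ u)) x s = -shrink δ (py (py u)) x s + -c * shrink δ u x s :=
      eq_neg_add_of_add_eq ((add_comm _ _).trans (hPDE x _ hy₀ hy₁))
    rw [hpx, py_py_shrink]
    field_simp
  convert hasSecondDeriv_sineCoeff (fun p hp => contDiffAt_shrink hu hδ hp) hPDE' k using 2 with x
  field_simp
  ring

lemma hasSecondDeriv_sineCoeff_of_boundary_eq_zero {c : ℝ}
    (hu : ContDiffOn ℝ 2 (uncurry u) (Prod.snd ⁻¹' Ioo (0 : ℝ) 1))
    (hcont : ContinuousOn (uncurry u) (Prod.snd ⁻¹' Icc (0 : ℝ) 1))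
    (hPDE : ∀ x y, 0 < y → y < 1 → px (px u) x y + py (py u) x y = -c * u x y)
    (hb : ∀ x, u x 0 = 0 ∧ u x 1 = 0) (k : ℕ) :
    HasSecondDeriv (sineCoeff k u) fun x => ((k * π) ^ 2 - c) * sineCoeff k u x := by
  have h0 : (0 : ℝ) ∈ closure (Ioo (0 : ℝ) (1 / 2)) := by
    rw [closure_Ioo (by norm_num)]
    norm_num
  have hcoeff := continuousOn_sineCoeff_shrink hcont k
  have hslice : ∀ s ∈ Icc (0 : ℝ) 1, ContinuousOn (fun q : ℝ × ℝ => shrink q.1 u q.2 s)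
      (Ico (0 : ℝ) (1 / 2) ×ˢ univ) := fun s hs =>
    (continuousOn_shrink hcont).comp (f := fun q : ℝ × ℝ => (q, s)) (by fun_prop)
      fun _ hq => ⟨hq, hs⟩
  have hne : ∀ q ∈ Ico (0 : ℝ) (1 / 2) ×ˢ (univ : Set ℝ), 1 - 2 * q.1 ≠ 0 := fun q hq => by
    linarith [hq.1.2]
  have hlim := HasSecondDeriv.of_mem_closure h0
    (F := fun δ => sineCoeff k (shrink δ u))
    (G := fun δ x => ((k * π / (1 - 2 * δ)) ^ 2 - c) * sineCoeff k (shrink δ u) x -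
      k * π / (1 - 2 * δ) ^ 2 * (shrink δ u x 0 - shrink δ u x 1 * cos (k * π)))
    (fun x => ?_) ?_ fun δ hδ => hasSecondDeriv_sineCoeff_shrink hu hPDE hδ k
  · simpa [shrink_zero, hb] using hlim
  all_goals rw [Ioo_insert_left (by norm_num)]
  · exact hcoeff.comp (f := fun δ => (δ, x)) (by fun_prop) fun _ hδ => ⟨hδ, mem_univ _⟩
  · refine ContinuousOn.sub (ContinuousOn.mul ?_ hcoeff) (ContinuousOn.mul ?_ ?_)
    · exact ((continuousOn_const.div (by fun_prop) hne).pow 2).sub continuousOn_const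
    · exact continuousOn_const.div (by fun_prop) fun q hq => pow_ne_zero 2 (hne q hq)
    · exact (hslice 0 (by simp)).sub ((hslice 1 (by simp)).mul continuousOn_const)

end StripShrinking

lemma isLittleO_exp_mul_abs_of_linear (C : ℝ) {w : ℝ} (hw : 0 < w) :
    (fun x => C * (1 + |x|)) =o[cocompact ℝ] fun x => exp (w * |x|) := by
  have hpow := fun n : ℕ => (isLittleO_pow_exp_pos_mul_atTop n hw).comp_tendsto
    (tendsto_norm_cocompact_atTop (E := ℝ))
  simpa [Function.comp_def] using ((hpow 0).add (hpow 1)).const_mul_left C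

lemma sineCoeff_eq_zero_of_isLittleO_exp {u : ℝ → ℝ → ℝ} {k : ℕ} (hk : k ≠ 1)
    (hode : HasSecondDeriv (sineCoeff k u) fun x => ((k * π) ^ 2 - π ^ 2) * sineCoeff k u x)
    (hgrowth : sineCoeff k u =o[cocompact ℝ] fun x => exp (√3 * π * |x|)) (x : ℝ) :
    sineCoeff k u x = 0 := by
  obtain rfl | hk₂ : k = 0 ∨ 2 ≤ k := by lia
  · simp [sineCoeff]
  have hk₂' : (2 : ℝ) ≤ k := by exact_mod_cast hk₂
  have hsq : √((k : ℝ) ^ 2 - 1) ^ 2 = (k : ℝ) ^ 2 - 1 := sq_sqrt (by nlinarith)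
  have hle : √3 ≤ √((k : ℝ) ^ 2 - 1) := sqrt_le_sqrt (by nlinarith)
  have hw : 0 < √((k : ℝ) ^ 2 - 1) * π :=
    mul_pos ((sqrt_pos.2 three_pos).trans_le hle) pi_pos
  refine HasSecondDeriv.eq_zero_of_isLittleO_exp hw ?_
    (hgrowth.trans_le fun x => ?_) x
  · convert hode using 3
    rw [mul_pow, hsq]
    ring
  · rw [norm_of_nonneg (exp_nonneg _), norm_of_nonneg (exp_nonneg _)]
    gcongr

-- The rate `√3 π` is that of the solution `sinh (√3 π x) sin (2 π y)`, the slowest growing one with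
-- a higher mode in `y`.
theorem stmt0_general (u : ℝ → ℝ → ℝ) {g : ℝ → ℝ}
    (hu : ContDiffOn ℝ 2 (uncurry u) (Prod.snd ⁻¹' Ioo (0 : ℝ) 1))
    (hcont : ContinuousOn (uncurry u) (Prod.snd ⁻¹' Icc (0 : ℝ) 1))
    (hPDE : ∀ x y, 0 < y → y < 1 → px (px u) x y + py (py u) x y = -(π ^ 2) * u x y)
    (hb : ∀ x, u x 0 = 0 ∧ u x 1 = 0)
    (hbound : ∀ x y, 0 ≤ y → y ≤ 1 → |u x y| ≤ g x)
    (hg : g =o[cocompact ℝ] fun x => exp (√3 * π * |x|)) :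
    ∃ A B : ℝ, ∀ x y, 0 < y → y < 1 → u x y = (A * x + B) * sin (π * y) := by
  have hode := hasSecondDeriv_sineCoeff_of_boundary_eq_zero hu hcont hPDE hb
  have hgrowth : ∀ k, sineCoeff k u =o[cocompact ℝ] fun x => exp (√3 * π * |x|) := fun k =>
    (IsBigO.of_bound' (.of_forall fun x => (abs_sineCoeff_le (fun y hy =>
      hbound x y hy.1 hy.2) k).trans (le_abs_self _))).trans_isLittleO hg
  obtain ⟨A, B, hAB⟩ := HasSecondDeriv.exists_eq_affine (f := sineCoeff 1 u) (by
    simpa using hode 1)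
  refine ⟨2 * A, 2 * B, fun x y hy₀ hy₁ => ?_⟩
  have hslice : ContinuousOn (u x) (Icc 0 1) :=
    hcont.comp (f := fun y => (x, y)) (by fun_prop) fun _ hy => hy
  have hfirst : ∫ s in 0..1, u x s * sin (π * s) = A * x + B := by
    simpa [sineCoeff] using hAB x
  rw [eq_mul_sin_of_integral_mul_sin_eq_zero hslice (fun k hk =>
    sineCoeff_eq_zero_of_isLittleO_exp hk (hode k) (hgrowth k) x) ⟨hy₀, hy₁⟩, hfirst]
  ring

/-- Solutions of -Δu = π²u in the strip {0 < y < 1}, vanishing on the line x = 0 and on the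
horizontal boundary, with at most linear growth, are of the form A·x·sin(πy). -/
theorem stmt0 (u : ℝ → ℝ → ℝ) (C : ℝ) (hC : 0 < C)
    (hsmooth : ContDiffOn ℝ (⊤ : ℕ∞) (fun p : ℝ × ℝ => u p.1 p.2) {p : ℝ × ℝ | 0 < p.2 ∧ p.2 < 1})
    (hcont : ContinuousOn (fun p : ℝ × ℝ => u p.1 p.2) {p : ℝ × ℝ | 0 ≤ p.2 ∧ p.2 ≤ 1})
    (hPDE : ∀ x y : ℝ, 0 < y → y < 1 →
      px (px u) x y + py (py u) x y = -(π ^ 2) * u x y)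
    (h0 : ∀ y : ℝ, 0 ≤ y → y ≤ 1 → u 0 y = 0)
    (hb : ∀ x : ℝ, u x 0 = 0 ∧ u x 1 = 0)
    (hgrowth : ∀ x y : ℝ, 0 ≤ y → y ≤ 1 → |u x y| ≤ C * (1 + |x|)) :
    ∃ A : ℝ, ∀ x y : ℝ, 0 < y → y < 1 → u x y = A * x * Real.sin (π * y) := by
  obtain ⟨A, B, h⟩ := stmt0_general u (contDiffOn_infty.1 hsmooth 2) hcont hPDE hb hgrowth
    (isLittleO_exp_mul_abs_of_linear C (by positivity))
  have hB : 0 = B := by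
    simpa [h0 2⁻¹ (by norm_num) (by norm_num), ← div_eq_mul_inv] using
      h 0 2⁻¹ (by norm_num) (by norm_num)
  exact ⟨A, fun x y hy₀ hy₁ => by rw [h x y hy₀ hy₁, ← hB, add_zero]⟩
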